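/- arXiv:1911.03989 — 6 statements merged into one kernel-verified Lean document; each statement's English description precedes it below -/
import Mathlib

section
/- Let A_1, …, A_m be n×n real symmetric matrices, b ∈ ℝ^m, and r > 0. If there exists a positive semidefinite n×n real symmetric matrix X with Tr(X) ≤ r² such that Tr(A_k X) = b_k for every k = 1, …, m, then b lies in the convex hull of the set {Q(x) : x ∈ ℝⁿ, ‖x‖ ≤ r}: there exist vectors x_1, …, x_n ∈ ℝⁿ with ‖x_i‖ ≤ r and coefficients α_i ≥ 0 with Σ_{i=1}^n α_i = 1 such that Σ_{i=1}^n α_i Q(x_i) = b. -/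
open Matrix

/-!
Diagonalize `X = U diag(λ) Uᵀ` with orthonormal eigenvectors `uᵢ` and eigenvalues `λᵢ ≥ 0`, so that
`bₖ = Tr(Aₖ X) = ∑ λᵢ uᵢᵀ Aₖ uᵢ` (`trace_mul_eq_sum_eigenvalues_mul`). Put `t = Tr X = ∑ λᵢ ≤ r²`.
The vectors `xᵢ = √t uᵢ` have norm `√t ≤ r`, and the weights `αᵢ = λᵢ / t` give
`∑ αᵢ Q(xᵢ) = ∑ λᵢ Q(uᵢ) = b`. If `t = 0`, then all `λᵢ` vanish and any convex weights work.
-/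

lemma trace_mul_eq_sum_eigenvalues_mul {n : ℕ} (A X : Matrix (Fin n) (Fin n) ℝ)
    (hX : X.IsHermitian) :
    (A * X).trace = ∑ i, hX.eigenvalues i *
      (hX.eigenvectorBasis i ⬝ᵥ A.mulVec (hX.eigenvectorBasis i)) := by
  set U : Matrix (Fin n) (Fin n) ℝ := hX.eigenvectorUnitary.1 with hU
  have hUU : U * star U = 1 := Unitary.coe_mul_star_self hX.eigenvectorUnitary
  have h1 : (A * X).trace = (star U * (A * (X * U))).trace := by
    rw [Matrix.trace_mul_comm (star U), Matrix.mul_assoc, Matrix.mul_assoc, hUU, Matrix.mul_one]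
  rw [h1, Matrix.trace]
  refine Finset.sum_congr rfl fun i _ => ?_
  have h2 : (star U * (A * (X * U))) i i = U.col i ⬝ᵥ A.mulVec (X.mulVec (U.col i)) := rfl
  rw [Matrix.diag_apply, h2, hU, hX.eigenvectorUnitary_col_eq, hX.mulVec_eigenvectorBasis,
    Matrix.mulVec_smul, dotProduct_smul, smul_eq_mul]

/-- Nonnegative reals on a nonempty index set are their sum times convex weights, also when the
sum is zero. -/
lemma exists_weights_mul_sum {n : ℕ} (hn : 0 < n) (l : Fin n → ℝ) (hl : ∀ i, 0 ≤ l i) :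
    ∃ α : Fin n → ℝ, (∀ i, 0 ≤ α i) ∧ ∑ i, α i = 1 ∧ ∀ i, α i * ∑ j, l j = l i := by
  by_cases h : ∑ j, l j = 0
  · have hz := (Finset.sum_eq_zero_iff_of_nonneg fun i _ => hl i).1 h
    refine ⟨fun _ => (n : ℝ)⁻¹, fun _ => by positivity, ?_, fun i => ?_⟩
    · have : (n : ℝ) ≠ 0 := by positivity
      simp [this]
    · rw [h, hz i (Finset.mem_univ i), mul_zero]
  · refine ⟨fun i => l i / ∑ j, l j, fun i => div_nonneg (hl i) (Finset.sum_nonneg fun j _ => hl j),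
      ?_, fun i => div_mul_cancel₀ _ h⟩
    rw [← Finset.sum_div, div_self h]

/-- If there is a positive semidefinite symmetric matrix `X` with
`Tr(X) ≤ r²` and `Tr(Aₖ X) = bₖ` for all `k`, then `b` is a convex combination
`∑ αᵢ Q(xᵢ)` of `n` values of `Q(x) = (xᵀA₁x, …, xᵀAₘx)` with `‖xᵢ‖ ≤ r`. -/
theorem convex_hull_relaxation_of_sdp_feasibility {n m : ℕ} (hn : 0 < n)
    (A : Fin m → Matrix (Fin n) (Fin n) ℝ) (hA : ∀ k, (A k).IsSymm)
    (b : Fin m → ℝ) (r : ℝ) (hr : 0 < r)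
    (X : Matrix (Fin n) (Fin n) ℝ) (hX : X.PosSemidef) (htr : X.trace ≤ r ^ 2)
    (hfeas : ∀ k, (A k * X).trace = b k) :
    ∃ (x : Fin n → EuclideanSpace ℝ (Fin n)) (α : Fin n → ℝ),
      (∀ i, ‖x i‖ ≤ r) ∧ (∀ i, 0 ≤ α i) ∧ ∑ i, α i = 1 ∧
      (∑ i, α i • (fun k => x i ⬝ᵥ (A k).mulVec (x i))) = b := by
  have hH := hX.isHermitian
  have ht : X.trace = ∑ i, hH.eigenvalues i := by simpa using hH.trace_eq_sum_eigenvalues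
  obtain ⟨α, hα0, hα1, hα⟩ := exists_weights_mul_sum hn hH.eigenvalues hX.eigenvalues_nonneg
  rw [← ht] at hα
  have ht0 : 0 ≤ X.trace := hX.trace_nonneg
  refine ⟨fun i => √X.trace • hH.eigenvectorBasis i, α, fun i => ?_, hα0, hα1, ?_⟩
  · rw [norm_smul, hH.eigenvectorBasis.norm_eq_one, mul_one, Real.norm_of_nonneg (Real.sqrt_nonneg _)]
    exact Real.sqrt_le_iff.2 ⟨hr.le, htr⟩
  · ext k
    rw [← hfeas k, trace_mul_eq_sum_eigenvalues_mul _ _ hH, Finset.sum_apply]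
    refine Finset.sum_congr rfl fun i _ => ?_
    simp only [Pi.smul_apply, smul_eq_mul, WithLp.ofLp_smul, Matrix.mulVec_smul, dotProduct_smul,
      smul_dotProduct]
    rw [← hα i, ← mul_assoc (√X.trace), Real.mul_self_sqrt ht0, mul_assoc]
end

section
/- Let A_1, …, A_m be n×n real symmetric matrices and b ∈ ℝ^m. Then b lies in the convex hull of the set {Q(x) : x ∈ ℝⁿ} if and only if there exists a positive semidefinite n×n real symmetric matrix X such that Tr(A_k X) = b_k for every k = 1, …, m. -/
open Matrix

/-! The matrix `x xᵀ` is positive semidefinite and `Tr (A (x xᵀ)) = xᵀ A x`, so the linear map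
`X ↦ (Tr (Aₖ X))ₖ` carries rank-one matrices to the values of the quadratic map `Q`.
Positive semidefinite matrices form a convex cone, so the image of that cone is convex, and it
contains the hull of the values. Conversely, a positive semidefinite `X` is a sum of `N` rank-one
matrices `vᵢ vᵢᵀ`, and homogeneity of degree two turns the sum of the `Q(vᵢ)` into the average
of the values `Q(√N vᵢ)`. -/

theorem trace_mul_vecMulVec_self {n : ℕ} (A : Matrix (Fin n) (Fin n) ℝ) (x : Fin n → ℝ) :
    (A * vecMulVec x x).trace = x ⬝ᵥ A.mulVec x := by
  rw [mul_vecMulVec, trace_vecMulVec, dotProduct_comm]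

/-- `b` lies in the convex hull of `{Q(x) : x ∈ ℝⁿ}`, where
`Q(x) = (xᵀA₁x, …, xᵀAₘx)` for symmetric matrices `Aₖ`, if and only if there exists
a positive semidefinite symmetric matrix `X` with `Tr(Aₖ X) = bₖ` for all `k`. -/
theorem convex_hull_relaxation_iff_sdp_feasibility {n m : ℕ}
    (A : Fin m → Matrix (Fin n) (Fin n) ℝ) (hA : ∀ k, (A k).IsSymm)
    (b : Fin m → ℝ) :
    b ∈ convexHull ℝ (Set.range (fun x : Fin n → ℝ => fun k => x ⬝ᵥ (A k).mulVec x)) ↔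
      ∃ X : Matrix (Fin n) (Fin n) ℝ, X.PosSemidef ∧ ∀ k, (A k * X).trace = b k := by
  constructor
  · intro hb
    refine convexHull_min (t := {c | ∃ X : Matrix (Fin n) (Fin n) ℝ,
      X.PosSemidef ∧ ∀ k, (A k * X).trace = c k}) ?_ ?_ hb
    · rintro _ ⟨x, rfl⟩
      exact ⟨vecMulVec x x, by simpa using posSemidef_vecMulVec_self_star x,
        fun k => trace_mul_vecMulVec_self (A k) x⟩
    · rintro c ⟨X, hX, hc⟩ d ⟨Y, hY, hd⟩ s t hs ht -
      refine ⟨s • X + t • Y, (hX.smul hs).add (hY.smul ht), fun k => ?_⟩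
      simp [mul_add, hc, hd]
  · rintro ⟨X, hX, hb⟩
    obtain ⟨N, v, rfl⟩ := posSemidef_iff_eq_sum_vecMulVec.mp hX
    have hsum : ∀ k, ∑ i, v i ⬝ᵥ (A k).mulVec (v i) = b k := fun k => by
      rw [← hb k, Finset.mul_sum, trace_sum]
      exact Finset.sum_congr rfl fun i _ => by simp [trace_mul_vecMulVec_self]
    rcases Nat.eq_zero_or_pos N with rfl | hN
    -- The empty sum is the value of `Q` at the origin.
    · refine subset_convexHull ℝ _ ⟨0, ?_⟩
      ext k
      simpa using hsum k
    · have hN' : (0 : ℝ) < N := by exact_mod_cast hN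
      have hmem := (convex_convexHull ℝ
        (Set.range (fun x : Fin n → ℝ => fun k => x ⬝ᵥ (A k).mulVec x))).sum_mem
        (t := Finset.univ) (w := fun _ : Fin N => (N : ℝ)⁻¹)
        (z := fun i k => (√N • v i) ⬝ᵥ (A k).mulVec (√N • v i))
        (fun _ _ => by positivity) (by simp [hN'.ne'])
        (fun i _ => subset_convexHull ℝ _ ⟨√N • v i, rfl⟩)
      convert hmem using 1
      ext k
      rw [← hsum k, Finset.sum_apply]
      refine Finset.sum_congr rfl fun i _ => ?_
      simp only [Pi.smul_apply, mulVec_smul, dotProduct_smul, smul_dotProduct, smul_eq_mul]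
      rw [← mul_assoc √(N : ℝ), Real.mul_self_sqrt hN'.le, inv_mul_cancel_left₀ hN'.ne']
end

section
/- (Distance duality) Let S be a nonempty compact subset of ℝ^m and p_0 ∈ ℝ^m. Then p_0 ∈ conv(S) if and only if for every p' ∈ conv(S) there exists v ∈ conv(S) with ‖p' − v‖ ≥ ‖p_0 − v‖. Equivalently, p_0 ∉ conv(S) if and only if there exists a witness p' ∈ conv(S), i.e., a point p' with ‖p' − v‖ < ‖p_0 − v‖ for all v ∈ conv(S). -/
open Matrix

/-!
If `p0` lies in the convex hull, `v = p0` is a pivot for every `p'`, so there is no witness.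
If it does not, the nearest point `p'` of the hull is a witness: the variational
inequality `⟪p0 - p', v - p'⟫ ≤ 0` makes the angle at `p'` in the triangle `p0 p' v` non-acute,
so `‖p0 - v‖² ≥ ‖p0 - p'‖² + ‖p' - v‖² > ‖p' - v‖²`.

The nearest point exists because the convex hull of a compact set in finite dimension is compact:
by Carathéodory's theorem it is a finite union, over `n ≤ dim + 1`, of continuous images of
`stdSimplex ℝ (Fin n) × S ^ n`.
-/

theorem isCompact_convexHull_of_isCompact {E : Type*} [NormedAddCommGroup E] [NormedSpace ℝ E]
    [FiniteDimensional ℝ E] {S : Set E} (hS : IsCompact S) : IsCompact (convexHull ℝ S) := by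
  have key : convexHull ℝ S = ⋃ n ∈ Set.Iic (Module.finrank ℝ E + 1),
      (fun q : (Fin n → ℝ) × (Fin n → E) => ∑ i, q.1 i • q.2 i) ''
        (stdSimplex ℝ (Fin n) ×ˢ Set.pi Set.univ fun _ => S) := by
    ext x
    simp only [Set.mem_iUnion, Set.mem_image, Set.mem_prod, Set.mem_pi, Set.mem_univ,
      forall_const, Prod.exists, exists_prop, Set.mem_Iic]
    constructor
    · intro hx
      obtain ⟨ι, hι, z, w, hz, hind, hw, hw1, hsum⟩ := eq_pos_convex_span_of_mem_convexHull hx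
      let e := (Fintype.equivFin ι).symm
      refine ⟨Fintype.card ι, ?_, w ∘ e, z ∘ e, ⟨⟨fun i => (hw _).le, ?_⟩, fun i => hz ⟨_, rfl⟩⟩,
        ?_⟩
      · exact hind.card_le_finrank_succ.trans
          (Nat.succ_le_succ (Submodule.finrank_le _))
      · rw [← hw1]
        exact e.sum_comp w
      · rw [← hsum]
        exact e.sum_comp fun i => w i • z i
    · rintro ⟨n, -, w, z, ⟨⟨hw, hw1⟩, hz⟩, rfl⟩
      exact (convex_convexHull ℝ S).sum_mem (fun i _ => hw i) hw1
        fun i _ => subset_convexHull ℝ S (hz i)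
  rw [key]
  refine (Set.finite_Iic _).isCompact_biUnion fun n _ => ?_
  exact ((isCompact_stdSimplex ℝ (Fin n)).prod (isCompact_univ_pi fun _ => hS)).image
    (by fun_prop)

/-- The nearest point to `p0` in a complete convex set not containing `p0` is a witness. -/
theorem exists_witness {E : Type*} [NormedAddCommGroup E] [InnerProductSpace ℝ E] {K : Set E}
    (hne : K.Nonempty) (hK : IsComplete K) (hc : Convex ℝ K) {p0 : E} (hp : p0 ∉ K) :
    ∃ p' ∈ K, ∀ v ∈ K, ‖p' - v‖ < ‖p0 - v‖ := by
  obtain ⟨p', hp', hmin⟩ := exists_norm_eq_iInf_of_complete_convex hne hK hc p0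
  refine ⟨p', hp', fun v hv => ?_⟩
  have hle := (norm_eq_iInf_iff_real_inner_le_zero hc hp').1 hmin v hv
  have hpos : 0 < ‖p0 - p'‖ := by
    rw [norm_pos_iff, sub_ne_zero]
    rintro rfl
    exact hp hp'
  have hexp := norm_sub_sq_real (p0 - p') (v - p')
  rw [sub_sub_sub_cancel_right, norm_sub_rev v p'] at hexp
  refine lt_of_pow_lt_pow_left₀ 2 (norm_nonneg _) ?_
  nlinarith [pow_pos hpos 2]

/-- **Distance duality.** `p₀ ∈ conv(S)` iff every `p' ∈ conv(S)` admits a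
pivot `v ∈ conv(S)` (a point with `‖p' − v‖ ≥ ‖p₀ − v‖`).  Equivalently, `p₀ ∉ conv(S)`
iff there is a witness `p' ∈ conv(S)`, i.e. `‖p' − v‖ < ‖p₀ − v‖` for all `v ∈ conv(S)`. -/
theorem distance_duality {m : ℕ} (S : Set (EuclideanSpace ℝ (Fin m)))
    (hS : IsCompact S) (hne : S.Nonempty) (p0 : EuclideanSpace ℝ (Fin m)) :
    (p0 ∈ convexHull ℝ S ↔
      ∀ p' ∈ convexHull ℝ S, ∃ v ∈ convexHull ℝ S, ‖p0 - v‖ ≤ ‖p' - v‖) ∧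
    (p0 ∉ convexHull ℝ S ↔
      ∃ p' ∈ convexHull ℝ S, ∀ v ∈ convexHull ℝ S, ‖p' - v‖ < ‖p0 - v‖) := by
  have key : p0 ∉ convexHull ℝ S ↔
      ∃ p' ∈ convexHull ℝ S, ∀ v ∈ convexHull ℝ S, ‖p' - v‖ < ‖p0 - v‖ := by
    constructor
    · exact exists_witness hne.convexHull (isCompact_convexHull_of_isCompact hS).isComplete
        (convex_convexHull ℝ S)
    · rintro ⟨p', -, h⟩ hp
      have := h p0 hp
      rw [sub_self, norm_zero] at this
      exact (norm_nonneg _).not_gt this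
  refine ⟨?_, key⟩
  rw [← not_iff_not, key]
  push Not
  rfl
end

section
/- (Distance duality, strict-pivot form) Let S be a nonempty compact subset of ℝ^m and p_0 ∈ ℝ^m. Then p_0 ∈ conv(S) if and only if for every p' ∈ conv(S) there exists v ∈ conv(S) with (p' − p_0)ᵀ(v − p_0) ≤ 0, i.e., a strict pivot. -/
/-! If `p0` lies in `conv(S)`, it is itself a strict pivot for every `p'`. Conversely, let `q` be the
point nearest to `p0` in `conv(S)`, which is compact by Carathéodory's theorem. Minimality means
`‖q - p0‖² ≤ ⟪q - p0, v - p0⟫` for all `v` in `conv(S)`, so a strict pivot at `q` forces `q = p0`.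
-/

open Matrix

/-- **Distance duality, strict-pivot form.** `p₀ ∈ conv(S)` iff every
`p' ∈ conv(S)` admits a strict pivot `v ∈ conv(S)`, i.e. `(p' − p₀)ᵀ(v − p₀) ≤ 0`. -/
theorem distance_duality_strict_pivot {m : ℕ} (S : Set (EuclideanSpace ℝ (Fin m)))
    (hS : IsCompact S) (hne : S.Nonempty) (p0 : EuclideanSpace ℝ (Fin m)) :
    p0 ∈ convexHull ℝ S ↔
      ∀ p' ∈ convexHull ℝ S, ∃ v ∈ convexHull ℝ S, (p' - p0) ⬝ᵥ (v - p0) ≤ 0 := by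
  have hdot (x y : EuclideanSpace ℝ (Fin m)) : x.ofLp ⬝ᵥ y.ofLp = inner ℝ x y := by
    rw [EuclideanSpace.inner_eq_star_dotProduct, star_trivial, dotProduct_comm]
  constructor
  · intro h p' _
    exact ⟨p0, h, by simp⟩
  · intro h
    -- Take for `p'` the point of `conv(S)` nearest to `p0`; it exists since
    -- `conv(S)` is compact.
    obtain ⟨q, hq, hmin⟩ := exists_norm_eq_iInf_of_complete_convex hne.convexHull
      (isCompact_convexHull_of_isCompact hS).isComplete (convex_convexHull ℝ S) p0
    rw [norm_eq_iInf_iff_real_inner_le_zero (convex_convexHull ℝ S) hq] at hmin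
    obtain ⟨v, hv, hle⟩ := h q hq
    -- With `d = q - p0`, minimality gives `‖d‖² ≤ ⟪d, v - p0⟫`, and the pivot makes this `≤ 0`.
    have hle' : inner ℝ (q - p0) (v - p0) ≤ 0 := by
      rw [← hdot]
      exact hle
    have hsplit : inner ℝ (p0 - q) (v - q)
        = inner ℝ (q - p0) (q - p0) - inner ℝ (q - p0) (v - p0) := by
      rw [← inner_sub_right, ← neg_sub q p0, inner_neg_left, ← inner_neg_right]
      congr 1
      abel
    have hself : inner ℝ (q - p0) (q - p0) ≤ 0 := by
      linarith [hmin v hv]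
    rwa [← sub_eq_zero.mp (real_inner_self_nonpos.mp hself)]
end

section
/- Let S be a nonempty compact subset of ℝ^m, p_0 ∈ ℝ^m with p_0 ∉ conv(S), and let δ* = min{‖x − p_0‖ : x ∈ conv(S)} be the distance from p_0 to conv(S). If p' ∈ conv(S) is a witness for p_0, i.e., ‖p' − v‖ < ‖p_0 − v‖ for every v ∈ conv(S), then δ* ≤ ‖p' − p_0‖ ≤ 2δ*; that is, a witness estimates the distance from p_0 to conv(S) to within a factor of two. -/
open Matrix

/-- If `p₀ ∉ conv(S)` and `p' ∈ conv(S)` is a witness for `p₀`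
(i.e. `‖p' − v‖ < ‖p₀ − v‖` for every `v ∈ conv(S)`), then with
`δ* = dist(p₀, conv(S))` we have `δ* ≤ ‖p' − p₀‖ ≤ 2δ*`. -/
theorem witness_estimates_distance {m : ℕ} (S : Set (EuclideanSpace ℝ (Fin m)))
    (hS : IsCompact S) (hne : S.Nonempty)
    (p0 : EuclideanSpace ℝ (Fin m)) (hp0 : p0 ∉ convexHull ℝ S)
    (p' : EuclideanSpace ℝ (Fin m)) (hp' : p' ∈ convexHull ℝ S)
    (hw : ∀ v ∈ convexHull ℝ S, ‖p' - v‖ < ‖p0 - v‖) :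
    Metric.infDist p0 (convexHull ℝ S) ≤ ‖p' - p0‖ ∧
      ‖p' - p0‖ ≤ 2 * Metric.infDist p0 (convexHull ℝ S) := by
  refine ⟨by simpa [dist_eq_norm, norm_sub_rev] using Metric.infDist_le_dist_of_mem (x := p0) hp', ?_⟩
  -- For every `v` in the hull, `‖p' - p0‖ ≤ ‖p' - v‖ + ‖v - p0‖ < 2 ‖p0 - v‖`;
  -- nonemptiness of the hull lets the infimum inherit this bound.
  have h : ‖p' - p0‖ / 2 ≤ Metric.infDist p0 (convexHull ℝ S) := by
    refine (Metric.le_infDist ⟨p', hp'⟩).2 fun {v} hv => ?_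
    have h1 := hw v hv
    have h2 := norm_sub_le_norm_sub_add_norm_sub p' v p0
    rw [norm_sub_rev v p0] at h2
    rw [dist_eq_norm]
    linarith
  linarith
end

section
/- Let A_1, …, A_m be n×n real symmetric positive semidefinite matrices, c_1, …, c_m ∈ ℝⁿ, and b ∈ ℝ^m. For z = (x, s) ∈ ℝⁿ × ℝ^m define Q(z) = (q_1(z), …, q_m(z)) where q_k(z) = xᵀA_k x + c_kᵀx + s_k². Then there exists z ∈ ℝⁿ × ℝ^m with Q(z) = b if and only if b lies in the convex hull of {Q(z) : z ∈ ℝⁿ × ℝ^m}. Equivalently, the system of convex quadratic inequalities xᵀA_k x + c_kᵀx ≤ b_k, k = 1, …, m, is feasible if and only if b lies in that convex hull. -/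
/-!
The set `S` of right-hand sides `b` for which `xᵀAₖx + cₖᵀx ≤ bₖ` (all `k`) is feasible is exactly
the range of `Q`: the slack `bₖ - (xᵀAₖx + cₖᵀx) ≥ 0` is absorbed by the square `sₖ²`. Since each
`Aₖ` is positive semidefinite, each left-hand side is convex in `x`, so `S`, the image of a joint
epigraph, is convex. Hence the range of `Q` is its own convex hull, which gives both equivalences.
-/

open Matrix

theorem convexOn_quadratic {n : ℕ} (A : Matrix (Fin n) (Fin n) ℝ) (hA : A.PosSemidef)
    (c : Fin n → ℝ) :
    ConvexOn ℝ Set.univ (fun x : Fin n → ℝ => x ⬝ᵥ A.mulVec x + c ⬝ᵥ x) := by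
  refine ⟨convex_univ, fun x _ y _ α β hα hβ hαβ => ?_⟩
  have hpos : 0 ≤ (x - y) ⬝ᵥ A.mulVec (x - y) := by
    simpa using hA.dotProduct_mulVec_nonneg (x - y)
  have hmul : 0 ≤ α * β * ((x - y) ⬝ᵥ A.mulVec (x - y)) :=
    mul_nonneg (mul_nonneg hα hβ) hpos
  obtain rfl : β = 1 - α := by linarith
  simp only [Matrix.mulVec_sub, Matrix.mulVec_add, Matrix.mulVec_smul, dotProduct_sub,
    sub_dotProduct, dotProduct_add, add_dotProduct, smul_dotProduct, dotProduct_smul,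
    smul_eq_mul] at hmul ⊢
  -- For `α + β = 1`, the convexity gap is `α * β` times the quadratic form at `x - y`.
  linarith

/-- The right-hand sides of the feasible systems form a convex set. -/
theorem convex_feasible_rhs {n m : ℕ}
    (A : Fin m → Matrix (Fin n) (Fin n) ℝ) (hA : ∀ k, (A k).PosSemidef)
    (c : Fin m → Fin n → ℝ) :
    Convex ℝ {b : Fin m → ℝ |
      ∃ x : Fin n → ℝ, ∀ k, x ⬝ᵥ (A k).mulVec x + c k ⬝ᵥ x ≤ b k} := by
  rintro b ⟨x, hx⟩ d ⟨y, hy⟩ α β hα hβ hαβ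
  refine ⟨α • x + β • y, fun k => ?_⟩
  refine ((convexOn_quadratic (A k) (hA k) (c k)).2 (Set.mem_univ x) (Set.mem_univ y)
    hα hβ hαβ).trans ?_
  exact add_le_add (mul_le_mul_of_nonneg_left (hx k) hα) (mul_le_mul_of_nonneg_left (hy k) hβ)

/-- Equality with the square slacks `sₖ²` is the same as inequality without them. -/
theorem range_eq_feasible_rhs {n m : ℕ}
    (A : Fin m → Matrix (Fin n) (Fin n) ℝ) (c : Fin m → Fin n → ℝ) :
    Set.range (fun z : (Fin n → ℝ) × (Fin m → ℝ) =>
        fun k => z.1 ⬝ᵥ (A k).mulVec z.1 + c k ⬝ᵥ z.1 + (z.2 k) ^ 2) =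
      {b : Fin m → ℝ | ∃ x : Fin n → ℝ, ∀ k, x ⬝ᵥ (A k).mulVec x + c k ⬝ᵥ x ≤ b k} := by
  ext b
  constructor
  · rintro ⟨z, rfl⟩
    exact ⟨z.1, fun k => le_add_of_nonneg_right (sq_nonneg _)⟩
  · rintro ⟨x, hx⟩
    refine ⟨(x, fun k => √(b k - (x ⬝ᵥ (A k).mulVec x + c k ⬝ᵥ x))), ?_⟩
    funext k
    simp only [Real.sq_sqrt (sub_nonneg.2 (hx k))]
    ring

/-- For positive semidefinite symmetric `Aₖ`, with
`Q(x,s) = (q₁(x,s), …, qₘ(x,s))` where `qₖ(x,s) = xᵀAₖx + cₖᵀx + sₖ²`, the system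
`Q(z) = b` is solvable iff `b` lies in the convex hull of the range of `Q`;
equivalently, the system of convex quadratic inequalities `xᵀAₖx + cₖᵀx ≤ bₖ`
is feasible iff `b` lies in that convex hull. -/
theorem convex_quadratic_feasibility_iff_chr {n m : ℕ}
    (A : Fin m → Matrix (Fin n) (Fin n) ℝ) (hA : ∀ k, (A k).PosSemidef)
    (c : Fin m → Fin n → ℝ) (b : Fin m → ℝ) :
    ((∃ z : (Fin n → ℝ) × (Fin m → ℝ),
        (fun k => z.1 ⬝ᵥ (A k).mulVec z.1 + c k ⬝ᵥ z.1 + (z.2 k) ^ 2) = b) ↔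
      b ∈ convexHull ℝ (Set.range
        (fun z : (Fin n → ℝ) × (Fin m → ℝ) =>
          fun k => z.1 ⬝ᵥ (A k).mulVec z.1 + c k ⬝ᵥ z.1 + (z.2 k) ^ 2))) ∧
    ((∃ x : Fin n → ℝ, ∀ k, x ⬝ᵥ (A k).mulVec x + c k ⬝ᵥ x ≤ b k) ↔
      b ∈ convexHull ℝ (Set.range
        (fun z : (Fin n → ℝ) × (Fin m → ℝ) =>
          fun k => z.1 ⬝ᵥ (A k).mulVec z.1 + c k ⬝ᵥ z.1 + (z.2 k) ^ 2))) := by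
  rw [(range_eq_feasible_rhs A c ▸ convex_feasible_rhs A hA c :
    Convex ℝ (Set.range _)).convexHull_eq]
  exact ⟨Iff.rfl, by rw [range_eq_feasible_rhs]; rfl⟩
end
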